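/- Let K be a CM field with CM-type Σ, and let V be a rational Hodge structure of weight k ≥ 1 that is of CM-type with field K. Assume V^{k,0}_σ = 0 for all σ ∈ Σ̄ and V^{0,k}_σ = 0 for all σ ∈ Σ. For integers r, s ≥ 0 with r + s = k - 1 define W^{r,s} := V^{r+1,s}_Σ ⊕ V^{r,s+1}_{Σ̄}. Then V_ℂ = ⊕_{r+s=k-1} W^{r,s} is a direct sum decomposition, c(W^{r,s}) = W^{s,r}, and each W^{r,s} is K-stable; i.e., the W^{r,s} define on V a rational Hodge structure of weight k-1 of CM-type with field K (the half twist V_{1/2}). -/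

import Mathlib

/-!
A primitive element `θ` of `K/ℚ` acts on `V_ℂ` by an operator killed by the separable polynomial
`minpoly ℚ θ`, so it is diagonalizable with eigenvalues among the distinct numbers `σ θ`, and its
`σ θ`-eigenspace is `V_σ`. Hence the `V_σ` are independent (`iSupIndep_Vsig`), and every `K`-stable
subspace, in particular each `V^{p,q}`, is the sum of its intersections with them
(`le_iSup_inf_Vsig`). So `V_ℂ` is the direct sum of the spaces `V^{p,q}_σ`.

The half twist regroups these summands: `V^{p,q}_σ` goes to `W^{p-1,q}` if `σ ∈ Σ` and to
`W^{p,q-1}` if `σ ∈ Σ̄`. Each summand goes to one piece only, since `Σ` and `Σ̄` partition the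
embeddings; the summands for which the shifted index would be negative vanish by hypothesis.
Conjugation maps `V^{p,q}_σ` to `V^{q,p}_{σ̄}` and so `W^{r,s}` to `W^{s,r}`; `K` acts on each
summand by scalars.
-/

open scoped TensorProduct
open Module

noncomputable section

/-- Scalar multiplication by `x : K` on `V`, as a `ℚ`-linear map. -/
def smulQ (K : Type*) [Field K] [Algebra ℚ K]
    (V : Type*) [AddCommGroup V] [Module ℚ V] [Module K V] [IsScalarTower ℚ K V]
    (x : K) : V →ₗ[ℚ] V where
  toFun v := x • v
  map_add' := by simp
  map_smul' q v := smul_comm x q v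

/-- The `ℂ`-linear extension of the action of `x : K` to the
complexification `V_ℂ = ℂ ⊗_ℚ V`. -/
def actK (K : Type*) [Field K] [Algebra ℚ K]
    (V : Type*) [AddCommGroup V] [Module ℚ V] [Module K V] [IsScalarTower ℚ K V]
    (x : K) : (ℂ ⊗[ℚ] V) →ₗ[ℂ] (ℂ ⊗[ℚ] V) :=
  LinearMap.baseChange ℂ (smulQ K V x)

/-- The eigenspace `V_σ = {v ∈ V_ℂ : x•v = σ(x)v for all x ∈ K}` attached to an
embedding `σ : K → ℂ`. -/
def Vsig (K : Type*) [Field K] [Algebra ℚ K]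
    (V : Type*) [AddCommGroup V] [Module ℚ V] [Module K V] [IsScalarTower ℚ K V]
    (σ : K →+* ℂ) : Submodule ℂ (ℂ ⊗[ℚ] V) :=
  ⨅ x : K, LinearMap.ker (actK K V x - σ x • LinearMap.id)

/-- The conjugation map `c = id_V ⊗ (complex conjugation)` on `V_ℂ = ℂ ⊗_ℚ V`,
as a `ℚ`-linear map. -/
def cmap (V : Type*) [AddCommGroup V] [Module ℚ V] :
    (ℂ ⊗[ℚ] V) →ₗ[ℚ] (ℂ ⊗[ℚ] V) :=
  TensorProduct.map (Complex.conjAe.toLinearMap.restrictScalars ℚ) LinearMap.id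

/-- `V^{p,q}_T := ⊕_{σ ∈ T} (V^{p,q} ∩ V_σ)` for a set `T` of embeddings. -/
def VpqT (K : Type*) [Field K] [Algebra ℚ K]
    (V : Type*) [AddCommGroup V] [Module ℚ V] [Module K V] [IsScalarTower ℚ K V]
    (Vpq : ℕ → ℕ → Submodule ℂ (ℂ ⊗[ℚ] V)) (T : Set (K →+* ℂ)) (p q : ℕ) :
    Submodule ℂ (ℂ ⊗[ℚ] V) :=
  ⨆ σ ∈ T, (Vpq p q ⊓ Vsig K V σ)

/-- The pieces `W^{r,s} := V^{r+1,s}_Σ ⊕ V^{r,s+1}_{Σ̄}` of the half twist. -/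
def halfTwistPiece (K : Type*) [Field K] [Algebra ℚ K]
    (V : Type*) [AddCommGroup V] [Module ℚ V] [Module K V] [IsScalarTower ℚ K V]
    (Vpq : ℕ → ℕ → Submodule ℂ (ℂ ⊗[ℚ] V)) (Sg : Set (K →+* ℂ)) (r s : ℕ) :
    Submodule ℂ (ℂ ⊗[ℚ] V) :=
  VpqT K V Vpq Sg (r + 1) s ⊔
    VpqT K V Vpq {σ | (starRingEnd ℂ).comp σ ∈ Sg} r (s + 1)

/-! ### The action of `K` and its eigenspaces -/

section Eigenspaces

open Polynomial

variable (K : Type*) [Field K] [NumberField K]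
  (V : Type*) [AddCommGroup V] [Module ℚ V] [Module K V] [IsScalarTower ℚ K V]

/-- The action of `K` on `V_ℂ`, as a homomorphism of `ℚ`-algebras. -/
def actKHom : K →ₐ[ℚ] Module.End ℂ (ℂ ⊗[ℚ] V) :=
  AlgHom.ofLinearMap
    { toFun := actK K V
      map_add' := fun x y => by
        ext v
        simp [actK, smulQ, add_smul, TensorProduct.tmul_add]
      map_smul' := fun q x => by
        ext v
        simp [actK, smulQ, TensorProduct.tmul_smul] }
    (by ext v; simp [actK, smulQ])
    (fun x y => by ext v; simp [actK, smulQ, mul_smul])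

variable {K V}

lemma actKHom_apply (x : K) : actKHom K V x = actK K V x := rfl

lemma mem_Vsig_iff {σ : K →+* ℂ} {v : ℂ ⊗[ℚ] V} :
    v ∈ Vsig K V σ ↔ ∀ x, actK K V x v = σ x • v := by
  simp [Vsig, Submodule.mem_iInf, sub_eq_zero]

/-- For a primitive element `θ` of `K/ℚ`, the joint eigenspace `V_σ` is the eigenspace of the
single operator `θ` for the eigenvalue `σ θ`. -/
lemma Vsig_eq_eigenspace {θ : K} (hθ : Algebra.adjoin ℚ {θ} = ⊤) (σ : K →+* ℂ) :
    Vsig K V σ = Module.End.eigenspace (actK K V θ) (σ θ) := by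
  ext v
  rw [mem_Vsig_iff, Module.End.mem_eigenspace_iff]
  refine ⟨fun h => h θ, fun h x => ?_⟩
  have hx : x ∈ Algebra.adjoin ℚ {θ} := hθ ▸ Algebra.mem_top
  induction hx using Algebra.adjoin_induction with
  | mem y hy =>
    rw [Set.mem_singleton_iff.mp hy]
    exact h
  | algebraMap q =>
    rw [← actKHom_apply, AlgHom.commutes]
    simpa using (algebraMap_smul ℂ q v).symm
  | add y z _ _ hy hz =>
    rw [← actKHom_apply, map_add, LinearMap.add_apply, actKHom_apply, actKHom_apply, hy, hz,
      map_add, add_smul]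
  | mul y z _ _ hy hz =>
    rw [← actKHom_apply, map_mul, Module.End.mul_apply, actKHom_apply, actKHom_apply, hz,
      map_smul, hy, smul_smul, map_mul, mul_comm]

/-- The minimal polynomial of `θ` annihilates the operator `θ` on `V_ℂ`. -/
lemma aeval_actK_minpoly (θ : K) :
    aeval (actK K V θ) ((minpoly ℚ θ).map (algebraMap ℚ ℂ)) = 0 := by
  rw [aeval_map_algebraMap, ← actKHom_apply, aeval_algHom_apply, minpoly.aeval, map_zero]

lemma exists_adjoin_eq_top : ∃ θ : K, Algebra.adjoin ℚ {θ} = ⊤ := by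
  obtain ⟨θ, hθ⟩ := Field.exists_primitive_element ℚ K
  refine ⟨θ, ?_⟩
  rw [← IntermediateField.adjoin_simple_toSubalgebra_of_isAlgebraic
    (Algebra.IsAlgebraic.isAlgebraic θ), hθ, IntermediateField.top_toSubalgebra]

/-- The spaces `V_σ` are independent: they are eigenspaces of a primitive element `θ`, and the
eigenvalues `σ θ` are pairwise distinct. -/
lemma iSupIndep_Vsig : iSupIndep (Vsig K V) := by
  obtain ⟨θ, hθ⟩ := exists_adjoin_eq_top (K := K)
  have hinj : Function.Injective fun σ : K →+* ℂ => σ θ := by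
    intro σ τ h
    have : σ.toRatAlgHom = τ.toRatAlgHom :=
      AlgHom.ext_of_adjoin_eq_top hθ (by simpa [Set.EqOn] using h)
    ext x
    exact DFunLike.congr_fun this x
  convert (Module.End.eigenspaces_iSupIndep (actK K V θ)).comp hinj using 1
  ext1 σ
  exact Vsig_eq_eigenspace hθ σ

/-- A `K`-stable subspace of `V_ℂ` is the sum of its intersections with the `V_σ`: a primitive
element acts semisimply because its minimal polynomial is separable, and its eigenvalues are
among the roots `σ θ` of that polynomial. -/
lemma le_iSup_inf_Vsig [FiniteDimensional ℚ V] (M : Submodule ℂ (ℂ ⊗[ℚ] V))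
    (hM : ∀ x : K, Submodule.map (actK K V x) M ≤ M) :
    M ≤ ⨆ σ : K →+* ℂ, M ⊓ Vsig K V σ := by
  obtain ⟨θ, hθ⟩ := exists_adjoin_eq_top (K := K)
  have hsep : ((minpoly ℚ θ).map (algebraMap ℚ ℂ)).Separable :=
    (minpoly.irreducible (Algebra.IsIntegral.isIntegral θ)).separable.map
  have hss : Module.End.IsSemisimple (actK K V θ) :=
    Module.End.isSemisimple_of_squarefree_aeval_eq_zero hsep.squarefree (aeval_actK_minpoly θ)
  have htop := hss.iSup_eigenspace_eq_top
  have hinf := Submodule.inf_iSup_genEigenspace (p := M) (f := actK K V θ)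
    (fun x hx => hM θ (Submodule.mem_map_of_mem hx)) 1
  change M ⊓ ⨆ μ, Module.End.eigenspace (actK K V θ) μ = ⨆ μ, M ⊓ Module.End.eigenspace (actK K V θ) μ at hinf
  rw [htop, inf_top_eq] at hinf
  refine hinf.le.trans (iSup_le fun μ => ?_)
  by_cases hμ : Module.End.eigenspace (actK K V θ) μ = ⊥
  · simp [hμ]
  obtain ⟨v, hv, hv0⟩ := Submodule.exists_mem_ne_zero_of_ne_bot hμ
  have hroot : μ ∈ (minpoly ℚ θ).rootSet ℂ := by
    have h := Module.End.aeval_apply_of_hasEigenvector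
      (p := (minpoly ℚ θ).map (algebraMap ℚ ℂ))
      (show Module.End.HasEigenvector (actK K V θ) μ v from ⟨hv, hv0⟩)
    rw [aeval_actK_minpoly, LinearMap.zero_apply, eq_comm, smul_eq_zero_iff_left hv0] at h
    rw [mem_rootSet]
    exact ⟨minpoly.ne_zero (Algebra.IsIntegral.isIntegral θ), by rwa [eval_map_algebraMap] at h⟩
  rw [← NumberField.Embeddings.range_eval_eq_rootSet_minpoly K ℂ θ] at hroot
  obtain ⟨σ, rfl⟩ := hroot
  exact (Vsig_eq_eigenspace (V := V) hθ σ) ▸ le_iSup (fun σ : K →+* ℂ => M ⊓ Vsig K V σ) σ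

end Eigenspaces

/-! ### Refining and regrouping independent families -/

/-- An independent family whose members contain independent subfamilies can be refined. -/
lemma iSupIndep_prod_of_le {ι κ α : Type*} [CompleteLattice α] [IsModularLattice α]
    {A : ι → α} {B : ι × κ → α} (hA : iSupIndep A) (hBA : ∀ t, B t ≤ A t.1)
    (hB : ∀ i, iSupIndep fun j => B (i, j)) : iSupIndep B := by
  rintro ⟨i, j⟩
  have h : Disjoint (B (i, j)) ((⨆ (j') (_ : j' ≠ j), B (i, j')) ⊔ ⨆ (i') (_ : i' ≠ i), A i') :=
    (hB i j).disjoint_sup_right_of_disjoint_sup_left <| (hA i).mono_left <|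
      sup_le (hBA (i, j)) (iSup₂_le fun j' _ => hBA (i, j'))
  refine h.mono_right (iSup₂_le ?_)
  rintro ⟨i', j'⟩ hne
  by_cases hi : i' = i
  · subst hi
    have hj : j' ≠ j := fun h => hne (by rw [h])
    exact le_sup_of_le_left (le_iSup₂ (f := fun j' (_ : j' ≠ j) => B (i', j')) j' hj)
  · exact le_sup_of_le_right ((hBA (i', j')).trans (le_iSup₂ (f := fun i' (_ : i' ≠ i) => A i') i' hi))

/-- Grouping an independent family along pairwise disjoint index sets keeps it independent. -/
lemma iSupIndep_biSup_of_disjoint {ι κ R M : Type*} [Ring R] [AddCommGroup M] [Module R M]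
    {B : κ → Submodule R M} (hB : iSupIndep B) {S : ι → Set κ}
    (hS : ∀ i j, i ≠ j → Disjoint (S i) (S j)) : iSupIndep fun i => ⨆ t ∈ S i, B t := by
  intro i
  refine (hB.disjoint_biSup_biSup (disjoint_compl_right (a := S i))).mono_right ?_
  refine iSup₂_le fun j hj => biSup_mono fun t ht hti => ?_
  exact Set.disjoint_left.mp (hS j i hj) ht hti

/-! ### Complex conjugation -/

section Conjugation

variable (V : Type*) [AddCommGroup V] [Module ℚ V]

lemma cmap_tmul (z : ℂ) (v : V) : cmap V (z ⊗ₜ v) = (starRingEnd ℂ z) ⊗ₜ v := rfl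

lemma cmap_cmap (w : ℂ ⊗[ℚ] V) : cmap V (cmap V w) = w := by
  induction w with
  | zero => simp
  | tmul z v => simp [cmap_tmul]
  | add x y hx hy => simp [hx, hy]

lemma cmap_smul (a : ℂ) (w : ℂ ⊗[ℚ] V) : cmap V (a • w) = starRingEnd ℂ a • cmap V w := by
  induction w with
  | zero => simp
  | tmul z v => simp [cmap_tmul, TensorProduct.smul_tmul']
  | add x y hx hy => simp [hx, hy]

/-- The conjugation `c` as a conjugate-linear map. -/
def cmapSemilinear : (ℂ ⊗[ℚ] V) →ₛₗ[starRingEnd ℂ] (ℂ ⊗[ℚ] V) where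
  toFun := cmap V
  map_add' := map_add _
  map_smul' := cmap_smul V

variable {V} {K : Type*} [Field K] [NumberField K] [Module K V] [IsScalarTower ℚ K V]

lemma actK_cmap (x : K) (w : ℂ ⊗[ℚ] V) : actK K V x (cmap V w) = cmap V (actK K V x w) := by
  induction w with
  | zero => simp
  | tmul z v => simp [cmap_tmul, actK]
  | add a b ha hb => simp [ha, hb]

lemma cmap_mem_Vsig {σ : K →+* ℂ} {w : ℂ ⊗[ℚ] V} (hw : w ∈ Vsig K V σ) :
    cmap V w ∈ Vsig K V ((starRingEnd ℂ).comp σ) := by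
  rw [mem_Vsig_iff] at *
  intro x
  rw [actK_cmap, hw, cmap_smul]
  rfl

end Conjugation

/-! ### The half twist -/

section HalfTwist

variable {K : Type*} [Field K] [NumberField K]
  {V : Type*} [AddCommGroup V] [Module ℚ V] [Module K V] [IsScalarTower ℚ K V]
  {Vpq : ℕ → ℕ → Submodule ℂ (ℂ ⊗[ℚ] V)} {Sg : Set (K →+* ℂ)}

/-- The indices `((p, q), σ)` whose spaces `V^{p,q}_σ` make up `W^{r,s}`. -/
def twistIndex (Sg : Set (K →+* ℂ)) (rs : ℕ × ℕ) : Set ((ℕ × ℕ) × (K →+* ℂ)) :=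
  {t | (t.2 ∈ Sg ∧ t.1 = (rs.1 + 1, rs.2)) ∨
    ((starRingEnd ℂ).comp t.2 ∈ Sg ∧ t.1 = (rs.1, rs.2 + 1))}

lemma halfTwistPiece_le {r s : ℕ} {N : Submodule ℂ (ℂ ⊗[ℚ] V)}
    (h₁ : ∀ σ ∈ Sg, Vpq (r + 1) s ⊓ Vsig K V σ ≤ N)
    (h₂ : ∀ σ : K →+* ℂ, (starRingEnd ℂ).comp σ ∈ Sg → Vpq r (s + 1) ⊓ Vsig K V σ ≤ N) :
    halfTwistPiece K V Vpq Sg r s ≤ N :=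
  sup_le (iSup₂_le h₁) (iSup₂_le h₂)

lemma inf_Vsig_le_left {r s : ℕ} {σ : K →+* ℂ} (hσ : σ ∈ Sg) :
    Vpq (r + 1) s ⊓ Vsig K V σ ≤ halfTwistPiece K V Vpq Sg r s :=
  le_sup_of_le_left (le_iSup₂ (f := fun σ (_ : σ ∈ Sg) => Vpq (r + 1) s ⊓ Vsig K V σ) σ hσ)

lemma inf_Vsig_le_right {r s : ℕ} {σ : K →+* ℂ} (hσ : (starRingEnd ℂ).comp σ ∈ Sg) :
    Vpq r (s + 1) ⊓ Vsig K V σ ≤ halfTwistPiece K V Vpq Sg r s :=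
  le_sup_of_le_right (le_iSup₂ (f := fun (σ : K →+* ℂ) (_ : σ ∈ {σ | (starRingEnd ℂ).comp σ ∈ Sg}) =>
    Vpq r (s + 1) ⊓ Vsig K V σ) σ hσ)

lemma halfTwistPiece_le_biSup (rs : ℕ × ℕ) :
    halfTwistPiece K V Vpq Sg rs.1 rs.2 ≤
      ⨆ t ∈ twistIndex Sg rs, Vpq t.1.1 t.1.2 ⊓ Vsig K V t.2 :=
  halfTwistPiece_le
    (fun σ hσ => le_iSup₂ (f := fun (t : (ℕ × ℕ) × (K →+* ℂ)) (_ : t ∈ twistIndex Sg rs) =>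
      Vpq t.1.1 t.1.2 ⊓ Vsig K V t.2) ((rs.1 + 1, rs.2), σ) (Or.inl ⟨hσ, rfl⟩))
    (fun σ hσ => le_iSup₂ (f := fun (t : (ℕ × ℕ) × (K →+* ℂ)) (_ : t ∈ twistIndex Sg rs) =>
      Vpq t.1.1 t.1.2 ⊓ Vsig K V t.2) ((rs.1, rs.2 + 1), σ) (Or.inr ⟨hσ, rfl⟩))

/-- As exactly one of `σ`, `σ̄` lies in `Σ`, a triple `(p, q, σ)` contributes to one `W^{r,s}` at
most. -/
lemma twistIndex_disjoint
    (hSg : ∀ σ : K →+* ℂ, Xor' (σ ∈ Sg) ((starRingEnd ℂ).comp σ ∈ Sg)) (i j : ℕ × ℕ)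
    (hij : i ≠ j) : Disjoint (twistIndex Sg i) (twistIndex Sg j) := by
  rw [Set.disjoint_left]
  rintro ⟨⟨p, q⟩, σ⟩ hi hj
  obtain ⟨i₁, i₂⟩ := i
  obtain ⟨j₁, j₂⟩ := j
  have h : ¬(σ ∈ Sg ∧ (starRingEnd ℂ).comp σ ∈ Sg) := by
    rcases hSg σ with h | h <;> tauto
  simp only [twistIndex, Set.mem_ofPred_eq, Prod.mk.injEq] at hi hj
  apply hij
  rw [Prod.mk.injEq]
  rcases hi with ⟨hi, h₁, h₂⟩ | ⟨hi, h₁, h₂⟩ <;> rcases hj with ⟨hj, h₃, h₄⟩ | ⟨hj, h₃, h₄⟩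
  · omega
  · tauto
  · tauto
  · omega

lemma map_cmap_halfTwistPiece_le
    (hcon : ∀ p q, Submodule.map (cmap V) ((Vpq p q).restrictScalars ℚ) =
      (Vpq q p).restrictScalars ℚ) (r s : ℕ) {w : ℂ ⊗[ℚ] V}
    (hw : w ∈ halfTwistPiece K V Vpq Sg r s) : cmap V w ∈ halfTwistPiece K V Vpq Sg s r := by
  have hpq : ∀ p q, ∀ w ∈ Vpq p q, cmap V w ∈ Vpq q p := fun p q w hw => by
    have h : cmap V w ∈ Submodule.map (cmap V) ((Vpq p q).restrictScalars ℚ) :=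
      Submodule.mem_map_of_mem hw
    rwa [hcon] at h
  suffices h : halfTwistPiece K V Vpq Sg r s ≤
      (halfTwistPiece K V Vpq Sg s r).comap (cmapSemilinear V) from h hw
  refine halfTwistPiece_le (fun σ hσ w hw => ?_) (fun σ hσ w hw => ?_)
  · refine inf_Vsig_le_right (σ := (starRingEnd ℂ).comp σ) ?_
      ⟨hpq _ _ _ hw.1, cmap_mem_Vsig hw.2⟩
    convert hσ using 1
    ext x
    simp
  · exact inf_Vsig_le_left hσ ⟨hpq _ _ _ hw.1, cmap_mem_Vsig hw.2⟩

end HalfTwist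

/-- let `V` be a rational Hodge structure of weight `k ≥ 1` of
CM-type with CM field `K` and CM-type `Σ`, such that `V^{k,0}_σ = 0` for all
`σ ∈ Σ̄` and `V^{0,k}_σ = 0` for all `σ ∈ Σ`.  Then the subspaces
`W^{r,s} = V^{r+1,s}_Σ ⊕ V^{r,s+1}_{Σ̄}` (for `r + s = k - 1`) define a rational
Hodge structure of weight `k-1` of CM-type with field `K` on `V` (the half
twist `V_{1/2}`): they give a direct sum decomposition of `V_ℂ`, conjugation
maps `W^{r,s}` onto `W^{s,r}`, and each `W^{r,s}` is `K`-stable. -/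
theorem halfTwist_isHodgeStructure
    -- `K` is a CM field (number field with complex conjugation `conj ≠ id`
    -- satisfying `σ(conj x) = star (σ x)` for every embedding `σ`):
    (K : Type*) [Field K] [NumberField K]
    (conj : K ≃ₐ[ℚ] K) (hconj : ∀ (σ : K →+* ℂ) (x : K), σ (conj x) = starRingEnd ℂ (σ x))
    (hconj_ne : conj ≠ AlgEquiv.refl)
    -- `Σ` is a CM-type of `K`:
    (Sg : Set (K →+* ℂ))
    (hSg : ∀ σ : K →+* ℂ, Xor' (σ ∈ Sg) ((starRingEnd ℂ).comp σ ∈ Sg))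
    -- `V` is a rational Hodge structure of weight `k ≥ 1`, of CM-type with field `K`:
    (V : Type*) [AddCommGroup V] [Module ℚ V] [Module K V] [IsScalarTower ℚ K V]
    [FiniteDimensional ℚ V]
    (k : ℕ) (hk : 1 ≤ k) (Vpq : ℕ → ℕ → Submodule ℂ (ℂ ⊗[ℚ] V))
    (hbot : ∀ p q, p + q ≠ k → Vpq p q = ⊥)
    (hint : DirectSum.IsInternal (fun pq : ℕ × ℕ => Vpq pq.1 pq.2))
    (hcon : ∀ p q, Submodule.map (cmap V) ((Vpq p q).restrictScalars ℚ) =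
      (Vpq q p).restrictScalars ℚ)
    (hKst : ∀ (x : K) (p q : ℕ), Submodule.map (actK K V x) (Vpq p q) ≤ Vpq p q)
    -- vanishing hypotheses: `V^{k,0}_σ = 0` for `σ ∈ Σ̄`, `V^{0,k}_σ = 0` for `σ ∈ Σ`:
    (hk0 : ∀ σ : K →+* ℂ, (starRingEnd ℂ).comp σ ∈ Sg → Vpq k 0 ⊓ Vsig K V σ = ⊥)
    (h0k : ∀ σ : K →+* ℂ, σ ∈ Sg → Vpq 0 k ⊓ Vsig K V σ = ⊥) :
    -- the `W^{r,s}` form a Hodge structure of weight `k-1` of CM-type with field `K`: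
    (∀ r s, r + s ≠ k - 1 → halfTwistPiece K V Vpq Sg r s = ⊥) ∧
    DirectSum.IsInternal (fun rs : ℕ × ℕ => halfTwistPiece K V Vpq Sg rs.1 rs.2) ∧
    (∀ r s, Submodule.map (cmap V) ((halfTwistPiece K V Vpq Sg r s).restrictScalars ℚ) =
      (halfTwistPiece K V Vpq Sg s r).restrictScalars ℚ) ∧
    (∀ (x : K) (r s : ℕ), Submodule.map (actK K V x) (halfTwistPiece K V Vpq Sg r s) ≤
      halfTwistPiece K V Vpq Sg r s) := by
  refine ⟨fun r s hrs => ?_, ?_, fun r s => ?_, fun x r s => ?_⟩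
  · rw [eq_bot_iff]
    refine halfTwistPiece_le (fun σ _ => ?_) (fun σ _ => ?_)
    · rw [hbot (r + 1) s (by omega), bot_inf_eq]
    · rw [hbot r (s + 1) (by omega), bot_inf_eq]
  · have hA := hint.submodule_iSupIndep
    have hB : iSupIndep fun t : (ℕ × ℕ) × (K →+* ℂ) => Vpq t.1.1 t.1.2 ⊓ Vsig K V t.2 :=
      iSupIndep_prod_of_le hA (fun _ => inf_le_left)
        (fun _ => iSupIndep_Vsig.mono fun _ => inf_le_right)
    refine DirectSum.isInternal_submodule_of_iSupIndep_of_iSup_eq_top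
      ((iSupIndep_biSup_of_disjoint hB (twistIndex_disjoint hSg)).mono halfTwistPiece_le_biSup) ?_
    rw [eq_top_iff, ← hint.submodule_iSup_eq_top]
    refine iSup_le fun ⟨p, q⟩ => (le_iSup_inf_Vsig _ fun x => hKst x p q).trans (iSup_le fun σ => ?_)
    by_cases hpq : p + q = k
    swap
    · simp [hbot p q hpq]
    -- The vanishing hypotheses handle the boundary cases `p = 0`, `σ ∈ Σ` and `q = 0`, `σ ∈ Σ̄`,
    -- in which the index shift would leave `ℕ × ℕ`.
    rcases hSg σ with ⟨hσ, -⟩ | ⟨hσ, -⟩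
    · rcases p with _ | r
      · obtain rfl : q = k := by omega
        simp [h0k σ hσ]
      · exact (inf_Vsig_le_left hσ).trans
          (le_iSup (fun rs : ℕ × ℕ => halfTwistPiece K V Vpq Sg rs.1 rs.2) (r, q))
    · rcases q with _ | s
      · obtain rfl : p = k := by omega
        simp [hk0 σ hσ]
      · exact (inf_Vsig_le_right hσ).trans
          (le_iSup (fun rs : ℕ × ℕ => halfTwistPiece K V Vpq Sg rs.1 rs.2) (p, s))
  · refine le_antisymm ?_ fun w hw => ?_
    · rintro _ ⟨w, hw, rfl⟩
      exact map_cmap_halfTwistPiece_le hcon r s hw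
    · exact ⟨cmap V w, map_cmap_halfTwistPiece_le hcon s r hw, cmap_cmap V w⟩
  · rw [Submodule.map_le_iff_le_comap]
    refine halfTwistPiece_le (fun σ hσ w hw => ?_) (fun σ hσ w hw => ?_)
    · rw [Submodule.mem_comap, mem_Vsig_iff.mp hw.2 x]
      exact Submodule.smul_mem _ _ (inf_Vsig_le_left hσ hw)
    · rw [Submodule.mem_comap, mem_Vsig_iff.mp hw.2 x]
      exact Submodule.smul_mem _ _ (inf_Vsig_le_right hσ hw)
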